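/- Fix i ∈ {1,…,M}, a linear subspace Γ ⊆ E, and X, Y ∈ Γ. If δ ≥ 0 and the block-i upper RIP with constant δ holds at every Z ∈ Γ, i.e. (1/l)·Σ_{j=(i−1)l+1}^{il} ⟨A_j, Z⟩² ≤ (1+δ)·‖Z‖² for all Z ∈ Γ, then ‖P_Γ(∇f_i(X) − ∇f_i(Y))‖ ≤ 2(1+δ)·‖X − Y‖. -/

import Mathlib

open RealInnerProductSpace

/-!
The difference of two gradients of a least-squares objective is a multiple of `S (X - Y)`, where
`S = ∑ ⟪A j, ·⟫ A j` is positive and has quadratic form `∑ ‖⟪A j, Z⟫‖ ^ 2`. The compression of `S`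
to `Γ` is again positive, hence its norm is the supremum of its Rayleigh quotients, and these are
exactly what the upper RIP on `Γ` bounds.
-/

section LeastSquares

open InnerProductSpace RCLike

variable {𝕜 E ι : Type*} [RCLike 𝕜] [NormedAddCommGroup E] [InnerProductSpace 𝕜 E]

theorem norm_apply_le_of_isSymmetric_of_abs_re_inner_le {T : E →L[𝕜] E} {C : ℝ}
    (hT : T.IsSymmetric) (hC : ∀ z, |re (inner 𝕜 (T z) z)| ≤ C * ‖z‖ ^ 2) (x : E) :
    ‖T x‖ ≤ C * ‖x‖ := by
  rcases eq_or_ne x 0 with rfl | hx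
  · simp
  have hC_nonneg : 0 ≤ C :=
    nonneg_of_mul_nonneg_left ((abs_nonneg _).trans (hC x)) (by positivity)
  have hnorm : ‖T‖ ≤ C := by
    rw [T.norm_eq_iSup_rayleighQuotient hT]
    refine ciSup_le fun z ↦ ?_
    rw [abs_div, abs_sq]
    exact div_le_of_le_mul₀ (sq_nonneg _) hC_nonneg (hC z)
  exact T.le_of_opNorm_le hnorm x

theorem norm_orthogonalProjectionOnto_apply_le_of_isPositive {T : E →L[𝕜] E} {C : ℝ}
    (hT : T.IsPositive) (U : Submodule 𝕜 E) [U.HasOrthogonalProjection]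
    (hC : ∀ z ∈ U, re (inner 𝕜 (T z) z) ≤ C * ‖z‖ ^ 2) {x : E} (hx : x ∈ U) :
    ‖U.orthogonalProjectionOnto (T x)‖ ≤ C * ‖x‖ := by
  have hcomp := hT.orthogonalProjectionOnto_comp U
  refine norm_apply_le_of_isSymmetric_of_abs_re_inner_le hcomp.isSymmetric (fun z ↦ ?_) ⟨x, hx⟩
  rw [abs_of_nonneg (hcomp.re_inner_nonneg_left z)]
  simpa only [ContinuousLinearMap.comp_apply, Submodule.coe_norm, Submodule.subtypeL_apply,
    U.inner_orthogonalProjectionOnto_eq_of_mem_right] using hC z z.2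

variable (𝕜) in
/-- The frame operator `Z ↦ ∑ j ∈ s, ⟪A j, Z⟫ • A j` of a finite family, that is, the Gram operator
of the measurement map `Z ↦ (⟪A j, Z⟫)_{j ∈ s}`. -/
noncomputable def frameOperator (s : Finset ι) (A : ι → E) : E →L[𝕜] E :=
  ∑ j ∈ s, rankOne 𝕜 (A j) (A j)

theorem frameOperator_apply (s : Finset ι) (A : ι → E) (Z : E) :
    frameOperator 𝕜 s A Z = ∑ j ∈ s, inner 𝕜 (A j) Z • A j := by
  simp only [frameOperator, sum_apply, rankOne_apply]

theorem isPositive_frameOperator (s : Finset ι) (A : ι → E) :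
    (frameOperator 𝕜 s A).IsPositive :=
  ContinuousLinearMap.isPositive_sum s fun j _ ↦ isPositive_rankOne_self (A j)

theorem re_inner_frameOperator_apply_self (s : Finset ι) (A : ι → E) (Z : E) :
    re (inner 𝕜 (frameOperator 𝕜 s A Z) Z) = ∑ j ∈ s, ‖inner 𝕜 (A j) Z‖ ^ 2 := by
  simp only [frameOperator_apply, sum_inner, inner_smul_left, RCLike.conj_mul, map_sum,
    ← ofReal_pow, ofReal_re]

/-- The gradient at `Z` of the least-squares objective `Z ↦ c * ∑ j ∈ s, ‖y j - ⟪A j, Z⟫‖ ^ 2`,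
given by its explicit formula; the block objective `f_i` has `c = 1 / l`. Over `ℂ` this is the
gradient for the underlying real inner product `re ⟪·, ·⟫`. -/
noncomputable def leastSquaresGradient (c : ℝ) (s : Finset ι) (A : ι → E) (y : ι → 𝕜) (Z : E) : E :=
  ((2 * c : ℝ) : 𝕜) • ∑ j ∈ s, (inner 𝕜 (A j) Z - y j) • A j

theorem leastSquaresGradient_sub_leastSquaresGradient (c : ℝ) (s : Finset ι) (A : ι → E)
    (y : ι → 𝕜) (X Y : E) :
    leastSquaresGradient c s A y X - leastSquaresGradient c s A y Y =
      ((2 * c : ℝ) : 𝕜) • frameOperator 𝕜 s A (X - Y) := by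
  simp only [leastSquaresGradient, frameOperator_apply, ← smul_sub, ← Finset.sum_sub_distrib,
    ← sub_smul, inner_sub_right, sub_sub_sub_cancel_right]

theorem stmt_7_general {c C : ℝ} (hc : 0 ≤ c) {s : Finset ι} {A : ι → E} (y : ι → 𝕜)
    (Γ : Submodule 𝕜 E) [Γ.HasOrthogonalProjection]
    (hRIP : ∀ Z ∈ Γ, c * ∑ j ∈ s, ‖inner 𝕜 (A j) Z‖ ^ 2 ≤ C * ‖Z‖ ^ 2)
    {X Y : E} (hX : X ∈ Γ) (hY : Y ∈ Γ) :
    ‖Γ.orthogonalProjectionOnto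
        (leastSquaresGradient c s A y X - leastSquaresGradient c s A y Y)‖ ≤
      2 * (C * ‖X - Y‖) := by
  have hpos : ((c : 𝕜) • frameOperator 𝕜 s A).IsPositive :=
    (isPositive_frameOperator s A).smul_of_nonneg (ofReal_nonneg.2 hc)
  have hquad : ∀ Z ∈ Γ, re (inner 𝕜 (((c : 𝕜) • frameOperator 𝕜 s A) Z) Z) ≤ C * ‖Z‖ ^ 2 := by
    intro Z hZ
    rw [smul_apply, inner_smul_left, conj_ofReal, re_ofReal_mul,
      re_inner_frameOperator_apply_self]
    exact hRIP Z hZ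
  have hproj := norm_orthogonalProjectionOnto_apply_le_of_isPositive hpos Γ hquad
    (Γ.sub_mem hX hY)
  rw [leastSquaresGradient_sub_leastSquaresGradient, ofReal_mul, mul_smul, map_smul, norm_smul,
    norm_of_nonneg zero_le_two]
  gcongr
  exact hproj

end LeastSquares

/-- For `X, Y` in a subspace `Γ` on which the block-`i` upper RIP with constant `δ ≥ 0` holds,
`‖P_Γ(∇fᵢ(X) - ∇fᵢ(Y))‖ ≤ 2(1+δ)‖X - Y‖`. -/
theorem stmt_7 {E : Type*} [NormedAddCommGroup E] [InnerProductSpace ℝ E]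
    [FiniteDimensional ℝ E]
    (m l M : ℕ) (hl : 1 ≤ l) (hM : 1 ≤ M) (hm : m = M * l)
    (A : ℕ → E) (y : ℕ → ℝ) (δ : ℝ) (hδ : 0 ≤ δ)
    (gradf : ℕ → E → E)
    (hgradf : ∀ i : ℕ, ∀ Z : E, gradf i Z =
      ((2 : ℝ) / (l : ℝ)) • ∑ j ∈ Finset.Ioc ((i - 1) * l) (i * l), (⟪A j, Z⟫ - y j) • A j)
    (i : ℕ) (hi : i ∈ Finset.Icc 1 M)
    (Γ : Submodule ℝ E) (X Y : E) (hX : X ∈ Γ) (hY : Y ∈ Γ)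
    (hRIP : ∀ Z ∈ Γ,
      (1 / (l : ℝ)) * ∑ j ∈ Finset.Ioc ((i - 1) * l) (i * l), ⟪A j, Z⟫ ^ 2 ≤
        (1 + δ) * ‖Z‖ ^ 2) :
    ‖(Submodule.orthogonalProjectionOnto Γ (gradf i X - gradf i Y) : E)‖ ≤ 2 * (1 + δ) * ‖X - Y‖ := by
  have hgrad : gradf i = leastSquaresGradient (1 / l : ℝ) (.Ioc ((i - 1) * l) (i * l)) A y := by
    funext Z
    simp only [hgradf, leastSquaresGradient, mul_one_div, RCLike.ofReal_real_eq_id, id]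
  rw [hgrad, mul_assoc]
  exact stmt_7_general (by positivity) y Γ (by simpa using hRIP) hX hY
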